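/- arXiv:2203.06135 — 2 statements merged into one kernel-verified Lean document; each statement's English description precedes it below -/
import Mathlib

section
/- Let d ≥ 1, let Δ ⊆ ℝ^d be a convex body, and let G, G̃ : Δ → ℝ be concave and upper semicontinuous functions with G(α) ≤ G̃(α) for all α ∈ Δ and G(α₀) < G̃(α₀) for some α₀ ∈ Δ. Then there exists a real number c such that ∫_Δ max(0, G(α)+c) dμ(α) < ∫_Δ max(0, G̃(α)+c) dμ(α), where μ is the Lebesgue measure on ℝ^d. -/
open MeasureTheory

/-!
Pick `m` strictly between `G α₀` and `Gt α₀`. By upper semicontinuity `G < m` on all of `Δ` near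
`α₀`, while along the segment from `α₀` to an interior point concavity keeps `Gt` above `m` for a
short while. Since a concave function is continuous in the interior, `G < m < Gt` on a nonempty open
subset of `Δ`, where `max 0 (G - m) = 0 < max 0 (Gt - m)`; so `c = -m` works. Both integrals are
finite because a concave function on a bounded set with nonempty interior is bounded above.
-/

open Filter Set
open scoped Topology

section Concave

theorem frequently_lt_nhdsWithin_interior_of_concaveOn {E : Type*} [AddCommGroup E] [Module ℝ E]
    [TopologicalSpace E] [IsTopologicalAddGroup E] [ContinuousSMul ℝ E] {s : Set E} {f : E → ℝ}
    {x : E} {m : ℝ} (hf : ConcaveOn ℝ s f) (hs : (interior s).Nonempty) (hx : x ∈ s)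
    (hm : m < f x) : ∃ᶠ y in 𝓝[interior s] x, m < f y := by
  obtain ⟨z, hz⟩ := hs
  have weights : ∀ᶠ t : ℝ in 𝓝[>] 0, t ∈ Ioc 0 1 := Ioc_mem_nhdsGT one_pos
  have tendsto_segment :
      Tendsto (fun t : ℝ ↦ (1 - t) • x + t • z) (𝓝[>] 0) (𝓝[interior s] x) := by
    refine tendsto_nhdsWithin_iff.2 ⟨?_, weights.mono fun t ht ↦ ?_⟩
    · exact (Continuous.tendsto' (by fun_prop) 0 x (by simp)).mono_left nhdsWithin_le_nhds
    · exact hf.1.combo_self_interior_mem_interior hx hz (sub_nonneg.2 ht.2) ht.1 (by ring)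
  have lt_chord : ∀ᶠ t : ℝ in 𝓝[>] 0, m < (1 - t) * f x + t * f z :=
    ((Continuous.tendsto' (by fun_prop) 0 (f x) (by simp)).mono_left
      nhdsWithin_le_nhds).eventually_const_lt hm
  refine tendsto_segment.frequently (Eventually.frequently ?_)
  filter_upwards [weights, lt_chord] with t ht hmt
  exact hmt.trans_le <| hf.2 hx (interior_subset hz) (sub_nonneg.2 ht.2) ht.1.le (by ring)

variable {E : Type*} [NormedAddCommGroup E] [NormedSpace ℝ E] {s : Set E} {f g : E → ℝ} {x : E}

theorem exists_pos_forall_add_smul_sub_mem_of_isBounded {V : Set E}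
    (hs : Bornology.IsBounded s) (hV : V ∈ 𝓝 x) :
    ∃ δ : ℝ, 0 < δ ∧ ∀ y ∈ s, x + δ • (x - y) ∈ V := by
  obtain ⟨r, hr, hrV⟩ := Metric.nhds_basis_closedBall.mem_iff.1 hV
  obtain ⟨R, hR, hsR⟩ := hs.subset_closedBall_lt 0 x
  refine ⟨r / R, by positivity, fun y hy ↦ hrV ?_⟩
  have norm_le : ‖x - y‖ ≤ R := mem_closedBall_iff_norm'.1 (hsR hy)
  rw [mem_closedBall_iff_norm, add_sub_cancel_left, norm_smul, Real.norm_of_nonneg (by positivity)]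
  calc r / R * ‖x - y‖ ≤ r / R * R := by gcongr
    _ = r := div_mul_cancel₀ r hR.ne'

-- Reflecting `y` through `x` with a small ratio `δ` lands where `f` is bounded below by `L`, and
-- concavity at `x`, which lies between `y` and its reflection, then bounds `f y` from above.
theorem bddAbove_image_of_concaveOn (hf : ConcaveOn ℝ s f) (hs : Bornology.IsBounded s)
    (hx : s ∈ 𝓝 x) (hfx : (𝓝 x).IsBoundedUnder (· ≥ ·) f) : BddAbove (f '' s) := by
  obtain ⟨L, hL⟩ := hfx
  obtain ⟨δ, hδ, hreflect⟩ :=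
    exists_pos_forall_add_smul_sub_mem_of_isBounded hs (inter_mem hx (eventually_map.1 hL))
  refine ⟨((1 + δ) * f x - L) / δ, forall_mem_image.2 fun y hy ↦ ?_⟩
  obtain ⟨hz, hLz : L ≤ f _⟩ := hreflect y hy
  set z := x + δ • (x - y) with hz_def
  have weights_sum : 1 / (1 + δ) + δ / (1 + δ) = 1 := by field_simp
  have combo_eq : (1 / (1 + δ)) • z + (δ / (1 + δ)) • y = x := by
    rw [hz_def]
    match_scalars
    · field_simp
    · field_simp
      ring
  have concave_at : 1 / (1 + δ) * f z + δ / (1 + δ) * f y ≤ f x := by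
    simpa only [combo_eq, smul_eq_mul] using
      hf.2 hz hy (by positivity) (by positivity) weights_sum
  field_simp at concave_at
  rw [le_div_iff₀ hδ]
  linarith

theorem exists_isOpen_forall_lt_and_lt_of_concaveOn [FiniteDimensional ℝ E] {m : ℝ}
    (hg : ConcaveOn ℝ s g) (hs : (interior s).Nonempty) (hx : x ∈ s)
    (hf : UpperSemicontinuousWithinAt f s x) (hfm : f x < m) (hmg : m < g x) :
    ∃ U ⊆ s, IsOpen U ∧ U.Nonempty ∧ ∀ y ∈ U, f y < m ∧ m < g y := by
  obtain ⟨V, hVopen, hxV, hV⟩ :=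
    mem_nhdsWithin.1 (upperSemicontinuousWithinAt_iff.1 hf m hfm)
  have hVx : ∀ᶠ y in 𝓝[interior s] x, y ∈ interior s ∩ V :=
    inter_mem self_mem_nhdsWithin (mem_nhdsWithin_of_mem_nhds (hVopen.mem_nhds hxV))
  obtain ⟨y, hmy, hys, hyV⟩ :=
    ((frequently_lt_nhdsWithin_interior_of_concaveOn hg hs hx hmg).and_eventually hVx).exists
  have hopen : IsOpen (interior s ∩ g ⁻¹' Ioi m) :=
    hg.continuousOn_interior.isOpen_inter_preimage isOpen_interior isOpen_Ioi
  exact ⟨interior s ∩ g ⁻¹' Ioi m ∩ V, fun z hz ↦ interior_subset hz.1.1, hopen.inter hVopen,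
    ⟨y, ⟨hys, hmy⟩, hyV⟩, fun z hz ↦ ⟨hV ⟨hz.2, interior_subset hz.1.1⟩, hz.1.2⟩⟩

theorem aestronglyMeasurable_restrict_of_concaveOn [FiniteDimensional ℝ E] [MeasurableSpace E]
    [BorelSpace E] (μ : Measure E) [μ.IsAddHaarMeasure] (hf : ConcaveOn ℝ s f) :
    AEStronglyMeasurable f (μ.restrict s) := by
  rw [← Measure.restrict_congr_set (interior_ae_eq_of_null_frontier (hf.1.addHaar_frontier μ))]
  exact hf.continuousOn_interior.aestronglyMeasurable isOpen_interior.measurableSet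

end Concave

section Integral

variable {X : Type*} [MeasurableSpace X] {μ : Measure X} {s t : Set X} {f g : X → ℝ}

theorem integrableOn_max_zero_add_const (hs : NullMeasurableSet s μ) (hμs : μ s < ⊤)
    (hf : AEStronglyMeasurable f (μ.restrict s)) (hbdd : BddAbove (f '' s)) (c : ℝ) :
    IntegrableOn (fun x ↦ max 0 (f x + c)) s μ := by
  obtain ⟨M, hM⟩ := hbdd
  refine .of_bound hμs (aestronglyMeasurable_const.sup (hf.add_const c)) (max 0 (M + c)) ?_
  filter_upwards [ae_restrict_mem₀ hs] with x hx
  rw [Real.norm_of_nonneg (le_max_left _ _)]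
  gcongr
  exact hM (mem_image_of_mem f hx)

theorem setIntegral_lt_setIntegral_of_forall_lt (hf : IntegrableOn f s μ)
    (hg : IntegrableOn g s μ) (hle : f ≤ᵐ[μ.restrict s] g) (hts : t ⊆ s) (ht : μ t ≠ 0)
    (hlt : ∀ x ∈ t, f x < g x) : ∫ x in s, f x ∂μ < ∫ x in s, g x ∂μ := by
  refine (integral_mono_ae hf hg hle).lt_of_ne fun heq ↦ ht ?_
  have hae : ∀ᵐ x ∂μ.restrict s, f x = g x := (integral_eq_iff_of_ae_le hf hg hle).1 heq
  rw [← Measure.restrict_eq_self μ hts]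
  exact measure_mono_null (fun x hx ↦ (hlt x hx).ne) (ae_iff.1 hae)

end Integral

theorem stmt_1_general {E : Type*} [NormedAddCommGroup E] [NormedSpace ℝ E]
    [FiniteDimensional ℝ E] [MeasurableSpace E] [BorelSpace E] (μ : Measure E)
    [μ.IsAddHaarMeasure] {Δ : Set E} (hbdd : Bornology.IsBounded Δ)
    (hint : (interior Δ).Nonempty) {G Gt : E → ℝ} (hG : AEStronglyMeasurable G (μ.restrict Δ))
    (hGt : ConcaveOn ℝ Δ Gt) (hle : ∀ α ∈ Δ, G α ≤ Gt α) {α₀ : E} (hα₀ : α₀ ∈ Δ)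
    (husc : UpperSemicontinuousWithinAt G Δ α₀) (hlt : G α₀ < Gt α₀) :
    ∃ c : ℝ, ∫ α in Δ, max 0 (G α + c) ∂μ < ∫ α in Δ, max 0 (Gt α + c) ∂μ := by
  have hΔ : NullMeasurableSet Δ μ := hGt.1.nullMeasurableSet μ
  have hGt_bdd : BddAbove (Gt '' Δ) := by
    obtain ⟨x, hx⟩ := hint
    have hcont := hGt.continuousOn_interior.continuousAt (isOpen_interior.mem_nhds hx)
    exact bddAbove_image_of_concaveOn hGt hbdd (mem_interior_iff_mem_nhds.1 hx)
      hcont.isBoundedUnder_ge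
  have hG_bdd : BddAbove (G '' Δ) := by
    obtain ⟨M, hM⟩ := hGt_bdd
    exact ⟨M, forall_mem_image.2 fun α hα ↦ (hle α hα).trans (hM (mem_image_of_mem Gt hα))⟩
  obtain ⟨m, hGm, hmGt⟩ := exists_between hlt
  obtain ⟨U, hUΔ, hUopen, hUne, hU⟩ :=
    exists_isOpen_forall_lt_and_lt_of_concaveOn hGt hint hα₀ husc hGm hmGt
  refine ⟨-m, setIntegral_lt_setIntegral_of_forall_lt
    (integrableOn_max_zero_add_const hΔ hbdd.measure_lt_top hG hG_bdd _)
    (integrableOn_max_zero_add_const hΔ hbdd.measure_lt_top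
      (aestronglyMeasurable_restrict_of_concaveOn μ hGt) hGt_bdd _)
    ?_ hUΔ (hUopen.measure_ne_zero μ hUne) fun α hα ↦ ?_⟩
  · filter_upwards [ae_restrict_mem₀ hΔ] with α hα
    gcongr
    exact hle α hα
  · obtain ⟨hGα, hGtα⟩ := hU α hα
    rw [max_eq_left (by linarith)]
    exact lt_max_of_lt_right (by linarith)

/-- A strict inequality somewhere between two ordered concave usc functions on a
convex body propagates to a strict inequality of the integrals ∫ max(0, ·+c). -/
theorem stmt_1 {d : ℕ} (hd : 1 ≤ d) (Δ : Set (EuclideanSpace ℝ (Fin d)))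
    (hconv : Convex ℝ Δ) (hcomp : IsCompact Δ) (hint : (interior Δ).Nonempty)
    (G Gt : EuclideanSpace ℝ (Fin d) → ℝ)
    (hGconc : ConcaveOn ℝ Δ G) (hGusc : UpperSemicontinuousOn G Δ)
    (hGtconc : ConcaveOn ℝ Δ Gt) (hGtusc : UpperSemicontinuousOn Gt Δ)
    (hle : ∀ α ∈ Δ, G α ≤ Gt α)
    (α₀ : EuclideanSpace ℝ (Fin d)) (hα₀ : α₀ ∈ Δ) (hlt : G α₀ < Gt α₀) :
    ∃ c : ℝ, (∫ α in Δ, max 0 (G α + c)) < ∫ α in Δ, max 0 (Gt α + c) :=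
  stmt_1_general volume hcomp.isBounded hint
    (aestronglyMeasurable_restrict_of_concaveOn volume hGconc) hGtconc hle hα₀ (hGusc α₀ hα₀) hlt
end

section
/- Let F be a field, let d ≥ 1, and let ν : Fˣ → ℤ^d be a group homomorphism from the multiplicative group of F to the additive group ℤ^d. For a family S assigning to each integer n ≥ 1 a subset S(n) ⊆ Fˣ, define Δ_ν(S) ⊆ ℝ^d as the closure (for the Euclidean topology) of the set {(1/n)·ν(s) | n ≥ 1, s ∈ S(n)}. Suppose S, S', T are three such families satisfying: (i) for all n, k ≥ 1, if s ∈ S(n) then s^k ∈ S(nk), and if s' ∈ S'(n) then s'^k ∈ S'(nk); (ii) for all n ≥ 1, if s ∈ S(n) and s' ∈ S'(n) then s·s' ∈ T(n). Then Δ_ν(S) + Δ_ν(S') ⊆ Δ_ν(T), where + denotes the Minkowski sum in ℝ^d. -/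
open Pointwise

/-- The Okounkov-type body of a family of sets of nonzero elements, with respect to
a `ℤ^d`-valued multiplicative-to-additive map ν: the Euclidean closure of the set of
normalized values ν(s)/n for s ∈ S(n), n ≥ 1. -/
def okounkovSet {F : Type*} [Field F] {d : ℕ} (ν : Fˣ → Fin d → ℤ)
    (S : ℕ → Set Fˣ) : Set (Fin d → ℝ) :=
  closure {x | ∃ n : ℕ, 1 ≤ n ∧ ∃ s ∈ S n, x = fun i => (ν s i : ℝ) / n}

section NormalizedValues

variable {M E : Type*} [Monoid M] [AddCommMonoid E] [Module ℚ≥0 E]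

/-- Stability of a graded family under powers: `k`-th powers multiply the degree by `k`.
Only positive degrees and exponents are constrained. -/
def PowStable (S : ℕ → Set M) : Prop :=
  ∀ n k : ℕ, 1 ≤ n → 1 ≤ k → ∀ s ∈ S n, s ^ k ∈ S (n * k)

/-- The normalized values `ν(s) / n`, for `s` in the degree-`n` piece of a graded family, whose
closure is the Okounkov-type body. Scalars in `ℚ≥0` are all that dividing by a degree requires;
every real vector space is such a module. -/
def normalizedValues (ν : Additive M →+ E) (S : ℕ → Set M) : Set E :=
  {x | ∃ n : ℕ, 1 ≤ n ∧ ∃ s ∈ S n, x = (n : ℚ≥0)⁻¹ • ν (.ofMul s)}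

theorem inv_smul_map_pow (ν : Additive M →+ E) (s : M) (n : ℕ) {k : ℕ} (hk : k ≠ 0) :
    ((n * k : ℕ) : ℚ≥0)⁻¹ • ν (.ofMul (s ^ k)) = (n : ℚ≥0)⁻¹ • ν (.ofMul s) := by
  have hk' : (k : ℚ≥0) ≠ 0 := Nat.cast_ne_zero.mpr hk
  rw [ofMul_pow, map_nsmul, ← Nat.cast_smul_eq_nsmul ℚ≥0, smul_smul, Nat.cast_mul, mul_inv,
    inv_mul_cancel_right₀ hk']

theorem PowStable.exists_common_degree {ν : Additive M →+ E} {S S' : ℕ → Set M}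
    (hS : PowStable S) (hS' : PowStable S') {x y : E}
    (hx : x ∈ normalizedValues ν S) (hy : y ∈ normalizedValues ν S') :
    ∃ n : ℕ, 1 ≤ n ∧ (∃ s ∈ S n, x = (n : ℚ≥0)⁻¹ • ν (.ofMul s)) ∧
      ∃ s' ∈ S' n, y = (n : ℚ≥0)⁻¹ • ν (.ofMul s') := by
  obtain ⟨n, hn, s, hs, rfl⟩ := hx
  obtain ⟨m, hm, s', hs', rfl⟩ := hy
  refine ⟨n * m, Nat.mul_pos hn hm, ⟨s ^ m, hS n m hn hm s hs, ?_⟩, s' ^ n, ?_, ?_⟩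
  · exact (inv_smul_map_pow ν s n (Nat.ne_of_gt hm)).symm
  · exact mul_comm m n ▸ hS' m n hm hn s' hs'
  · exact mul_comm m n ▸ (inv_smul_map_pow ν s' m (Nat.ne_of_gt hn)).symm

theorem normalizedValues_add_subset (ν : Additive M →+ E) {S S' T : ℕ → Set M}
    (hS : PowStable S) (hS' : PowStable S')
    (hT : ∀ n : ℕ, 1 ≤ n → ∀ s ∈ S n, ∀ s' ∈ S' n, s * s' ∈ T n) :
    normalizedValues ν S + normalizedValues ν S' ⊆ normalizedValues ν T := by
  rintro _ ⟨x, hx, y, hy, rfl⟩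
  obtain ⟨n, hn, ⟨s, hs, rfl⟩, s', hs', rfl⟩ := hS.exists_common_degree hS' hx hy
  exact ⟨n, hn, s * s', hT n hn s hs s' hs', by rw [ofMul_mul, map_add, smul_add]⟩

theorem stmt_8_general [TopologicalSpace E] [ContinuousAdd E] (ν : Additive M →+ E)
    {S S' T : ℕ → Set M} (hS : PowStable S) (hS' : PowStable S')
    (hT : ∀ n : ℕ, 1 ≤ n → ∀ s ∈ S n, ∀ s' ∈ S' n, s * s' ∈ T n) :
    closure (normalizedValues ν S) + closure (normalizedValues ν S') ⊆
      closure (normalizedValues ν T) :=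
  (vadd_set_closure_subset _ _).trans (closure_mono (normalizedValues_add_subset ν hS hS' hT))

end NormalizedValues

/-- A multiplicative-to-additive map `ν : Fˣ → ℤ^d`, viewed as an additive homomorphism to the
space `ℝ^d` in which its values are normalized. -/
def realValuation {F : Type*} [Field F] {d : ℕ} (ν : Fˣ → Fin d → ℤ)
    (hν : ∀ a b : Fˣ, ν (a * b) = ν a + ν b) : Additive Fˣ →+ Fin d → ℝ :=
  ((Int.castAddHom ℝ).compLeft (Fin d)).comp (AddMonoidHom.mk' (ν ∘ Additive.toMul) hν)

theorem realValuation_ofMul {F : Type*} [Field F] {d : ℕ} (ν : Fˣ → Fin d → ℤ)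
    (hν : ∀ a b : Fˣ, ν (a * b) = ν a + ν b) (s : Fˣ) (i : Fin d) :
    realValuation ν hν (.ofMul s) i = ν s i :=
  rfl

theorem okounkovSet_eq_closure_normalizedValues {F : Type*} [Field F] {d : ℕ}
    (ν : Fˣ → Fin d → ℤ) (hν : ∀ a b : Fˣ, ν (a * b) = ν a + ν b) (S : ℕ → Set Fˣ) :
    okounkovSet ν S = closure (normalizedValues (realValuation ν hν) S) := by
  have normalize (n : ℕ) (s : Fˣ) :
      (fun i => (ν s i : ℝ) / n) = (n : ℚ≥0)⁻¹ • realValuation ν hν (.ofMul s) := by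
    ext i
    simp [realValuation_ofMul, NNRat.smul_def, div_eq_inv_mul]
  simp only [okounkovSet, normalizedValues, normalize]

/-- Superadditivity of Okounkov-type bodies: if S and S' are stable under powers and
products of S(n) with S'(n) land in T(n), then Δ_ν(S) + Δ_ν(S') ⊆ Δ_ν(T). -/
theorem stmt_8 {F : Type*} [Field F] {d : ℕ} (hd : 1 ≤ d)
    (ν : Fˣ → Fin d → ℤ) (hν : ∀ a b : Fˣ, ν (a * b) = ν a + ν b)
    (S S' T : ℕ → Set Fˣ)
    (hS : ∀ n k : ℕ, 1 ≤ n → 1 ≤ k → ∀ s ∈ S n, s ^ k ∈ S (n * k))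
    (hS' : ∀ n k : ℕ, 1 ≤ n → 1 ≤ k → ∀ s ∈ S' n, s ^ k ∈ S' (n * k))
    (hT : ∀ n : ℕ, 1 ≤ n → ∀ s ∈ S n, ∀ s' ∈ S' n, s * s' ∈ T n) :
    okounkovSet ν S + okounkovSet ν S' ⊆ okounkovSet ν T := by
  simp only [okounkovSet_eq_closure_normalizedValues ν hν]
  exact stmt_8_general (realValuation ν hν) hS hS' hT
end
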